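/- Fix constants c̃ ≥ 0, λ > 0, μ ∈ (0,1], and a real q ≥ 1. Then there exists a constant C > 0, depending only on c̃, λ, μ and q, with the following property: for every probability space (Ω, 𝔽, ℙ), every A ∈ (0,1], every m ≥ 0, and every nonnegative random variable Y on Ω such that ℙ(Y < 1/y) ≤ c̃ · exp(−λ (A y)^μ / (1+m)²) for all y ≥ 1/A, one has E[Y^{−q}] ≤ C · A^{−q} · (1+m)^{2q/μ + 2} (where Y^{−q} is interpreted as +∞ on {Y = 0} and the expectation is a Lebesgue integral with values in [0,∞]). -/

import Mathlib

open MeasureTheory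

lemma ime_summable (lam mu q : ℝ) (hlam : 0 < lam) (hmu0 : 0 < mu) (hq : 1 ≤ q) :
    Summable (fun n : ℕ => ((n : ℝ) + 2) ^ q * Real.exp (-lam * ((n : ℝ) + 1) ^ mu)) := by
  have h1 := isLittleO_exp_neg_mul_rpow_atTop hlam (-(q + 2) / mu)
  have h2 : Filter.Tendsto (fun n : ℕ => ((n : ℝ) + 1) ^ mu) Filter.atTop Filter.atTop :=
    (tendsto_rpow_atTop hmu0).comp
      (Filter.tendsto_atTop_add_const_right _ _ tendsto_natCast_atTop_atTop)
  have h3 := (h1.comp_tendsto h2).isBigO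
  have h4 : (fun n : ℕ => ((n : ℝ) + 2) ^ q) =O[Filter.atTop]
      (fun n : ℕ => ((n : ℝ) + 1) ^ q) := by
    refine Asymptotics.IsBigO.of_bound (2 ^ q) (Filter.Eventually.of_forall fun n => ?_)
    have hn : (0 : ℝ) ≤ n := Nat.cast_nonneg n
    rw [Real.norm_of_nonneg (by positivity), Real.norm_of_nonneg (by positivity),
      ← Real.mul_rpow (by norm_num) (by positivity)]
    exact Real.rpow_le_rpow (by positivity) (by linarith) (by linarith)
  have h5 := h4.mul h3
  have hs : Summable (fun n : ℕ => ((n : ℝ) + 1) ^ (-2 : ℝ)) := by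
    have := (summable_nat_add_iff 1).2 (Real.summable_nat_rpow.2 (by norm_num : (-2 : ℝ) < -1))
    simpa using this
  refine summable_of_isBigO_nat hs (h5.trans_eventuallyEq ?_)
  refine Filter.Eventually.of_forall fun n => ?_
  have hn : (0 : ℝ) < (n : ℝ) + 1 := by positivity
  simp only [Function.comp]
  rw [← Real.rpow_mul hn.le, ← Real.rpow_add hn]
  congr 1
  field_simp
  ring

lemma ime_pointwise (q B y : ℝ) (hq : 1 ≤ q) (hB : 0 < B) (hy : 0 ≤ y) :
    (ENNReal.ofReal y) ^ (-q) ≤ ENNReal.ofReal (B ^ q) *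
      (1 + ∑' n : ℕ, ENNReal.ofReal (((n : ℝ) + 2) ^ q) *
        (if y < 1 / (B * ((n : ℝ) + 1)) then 1 else 0)) := by
  have hq0 : 0 < q := by linarith
  have hBq : 0 < B ^ q := Real.rpow_pos_of_pos hB q
  rcases hy.eq_or_lt with rfl | hy
  · have htop : ∑' n : ℕ, ENNReal.ofReal (((n : ℝ) + 2) ^ q) *
        (if (0 : ℝ) < 1 / (B * ((n : ℝ) + 1)) then 1 else 0) = ⊤ := by
      rw [eq_top_iff, ← ENNReal.tsum_const_eq_top_of_ne_zero (α := ℕ) one_ne_zero]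
      refine ENNReal.tsum_le_tsum fun n => ?_
      rw [if_pos (by positivity), mul_one, ENNReal.one_le_ofReal]
      exact Real.one_le_rpow (by linarith [Nat.cast_nonneg (α := ℝ) n]) hq0.le
    rw [htop, add_top, ENNReal.mul_top (by simpa using hBq)]
    exact le_top
  · rw [ENNReal.ofReal_rpow_of_pos hy]
    set s : ℝ := 1 / (B * y) with hs
    have hs0 : 0 < s := by positivity
    have hys : y ^ (-q) = B ^ q * s ^ q := by
      rw [← Real.mul_rpow hB.le hs0.le, Real.rpow_neg hy.le, ← Real.inv_rpow hy.le]
      congr 1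
      rw [hs]; field_simp
    rw [hys, ENNReal.ofReal_mul hBq.le]
    gcongr
    by_cases h1 : s ≤ 1
    · refine le_trans ?_ le_self_add
      rw [ENNReal.ofReal_le_one]
      exact Real.rpow_le_one hs0.le h1 hq0.le
    · push Not at h1
      refine le_trans ?_ le_add_self
      obtain ⟨n, hn1, hn2⟩ : ∃ n : ℕ, (n : ℝ) + 1 < s ∧ s ≤ (n : ℝ) + 2 := by
        have hc : 1 < ⌈s⌉₊ := Nat.lt_ceil.2 (by simpa using h1)
        obtain ⟨k, hk⟩ := Nat.exists_eq_add_of_le hc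
        refine ⟨k, ?_, ?_⟩
        · have : k + 1 < ⌈s⌉₊ := by omega
          simpa using Nat.lt_ceil.1 this
        · have := Nat.le_ceil s
          rw [hk] at this
          push_cast at this
          linarith
      refine le_trans ?_ (ENNReal.le_tsum n)
      rw [if_pos, mul_one]
      · exact ENNReal.ofReal_le_ofReal (Real.rpow_le_rpow hs0.le hn2 hq0.le)
      · rw [hs, lt_div_iff₀ (by positivity)] at hn1
        rw [lt_div_iff₀ (by positivity)]
        linarith

theorem inverse_moment_estimate
    (ctilde lam mu q : ℝ) (hc : 0 ≤ ctilde) (hlam : 0 < lam)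
    (hmu0 : 0 < mu) (hmu1 : mu ≤ 1) (hq : 1 ≤ q) :
    ∃ C : ℝ, 0 < C ∧
      ∀ (Ω : Type) (mΩ : MeasurableSpace Ω) (P : Measure Ω),
        IsProbabilityMeasure P →
        ∀ A m : ℝ, 0 < A → A ≤ 1 → 0 ≤ m →
        ∀ Y : Ω → ℝ, Measurable Y → (∀ ω, 0 ≤ Y ω) →
        (∀ y : ℝ, 1 / A ≤ y →
          P {ω | Y ω < 1 / y} ≤
            ENNReal.ofReal (ctilde * Real.exp (-lam * (A * y) ^ mu / (1 + m) ^ 2))) →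
        ∫⁻ ω, (ENNReal.ofReal (Y ω)) ^ (-q) ∂P ≤
          ENNReal.ofReal (C * A ^ (-q) * (1 + m) ^ (2 * q / mu + 2)) := by
  have hsum := ime_summable lam mu q hlam hmu0 hq
  set a : ℕ → ℝ := fun n => ((n : ℝ) + 2) ^ q * Real.exp (-lam * ((n : ℝ) + 1) ^ mu) with ha
  have ha0 : ∀ n, 0 ≤ a n := fun n => by simp only [ha]; positivity
  have hS : 0 ≤ ∑' n, ctilde * a n := tsum_nonneg fun n => mul_nonneg hc (ha0 n)
  refine ⟨1 + ∑' n, ctilde * a n, by linarith, ?_⟩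
  intro Ω mΩ P hP A m hA hA1 hm Y hY hY0 hT
  have hm1 : (1 : ℝ) ≤ 1 + m := by linarith
  have hm0 : (0 : ℝ) < 1 + m := by linarith
  set B : ℝ := A⁻¹ * (1 + m) ^ (2 / mu) with hBdef
  have hr1 : 1 ≤ (1 + m) ^ (2 / mu) := Real.one_le_rpow hm1 (by positivity)
  have hB : 0 < B := by positivity
  have hBq : B ^ q = A ^ (-q) * (1 + m) ^ (2 * q / mu) := by
    rw [hBdef, Real.mul_rpow (by positivity) (by positivity), Real.inv_rpow hA.le,
      ← Real.rpow_neg hA.le, ← Real.rpow_mul hm0.le]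
    congr 2
    ring
  have hset : ∀ n : ℕ, MeasurableSet {ω | Y ω < 1 / (B * ((n : ℝ) + 1))} := fun n =>
    measurableSet_lt hY measurable_const
  have hprob : ∀ n : ℕ, P {ω | Y ω < 1 / (B * ((n : ℝ) + 1))} ≤
      ENNReal.ofReal (ctilde * Real.exp (-lam * ((n : ℝ) + 1) ^ mu)) := by
    intro n
    have hn : (1 : ℝ) ≤ (n : ℝ) + 1 := by linarith [Nat.cast_nonneg (α := ℝ) n]
    refine (hT (B * ((n : ℝ) + 1)) ?_).trans (le_of_eq ?_)
    · rw [hBdef, one_div, mul_assoc]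
      exact le_mul_of_one_le_right (by positivity) (one_le_mul_of_one_le_of_one_le hr1 hn)
    · have e1 : A * (B * ((n : ℝ) + 1)) = (1 + m) ^ (2 / mu) * ((n : ℝ) + 1) := by
        rw [hBdef]; field_simp
      have e2 : ((1 + m) ^ (2 / mu)) ^ mu = (1 + m) ^ 2 := by
        rw [← Real.rpow_mul hm0.le, div_mul_cancel₀ _ hmu0.ne']
        exact Real.rpow_two _
      rw [e1, Real.mul_rpow (by positivity) (by positivity), e2]
      congr 3
      field_simp
  calc ∫⁻ ω, (ENNReal.ofReal (Y ω)) ^ (-q) ∂P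
      ≤ ∫⁻ ω, ENNReal.ofReal (B ^ q) *
      (1 + ∑' n : ℕ, ENNReal.ofReal (((n : ℝ) + 2) ^ q) *
        ({ω | Y ω < 1 / (B * ((n : ℝ) + 1))}.indicator 1 ω)) ∂P := by
        refine lintegral_mono fun ω => ?_
        refine (ime_pointwise q B (Y ω) hq hB (hY0 ω)).trans (le_of_eq ?_)
        simp only [Set.indicator, Set.mem_setOf_eq, Pi.one_apply]
    _ = ENNReal.ofReal (B ^ q) * (1 + ∑' n : ℕ, ENNReal.ofReal (((n : ℝ) + 2) ^ q) *
        P {ω | Y ω < 1 / (B * ((n : ℝ) + 1))}) := by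
        have hmeas : ∀ n : ℕ, Measurable
            ({ω | Y ω < 1 / (B * ((n : ℝ) + 1))}.indicator (1 : Ω → ENNReal)) :=
          fun n => measurable_one.indicator (hset n)
        rw [lintegral_const_mul' _ _ ENNReal.ofReal_ne_top, lintegral_add_left measurable_const,
          lintegral_tsum fun n => ((hmeas n).const_mul _).aemeasurable]
        simp only [lintegral_const, measure_univ, mul_one]
        congr 3
        funext n
        rw [lintegral_const_mul _ (hmeas n), lintegral_indicator_one (hset n)]
    _ ≤ ENNReal.ofReal (B ^ q) * (1 + ∑' n : ℕ, ENNReal.ofReal (ctilde * a n)) := by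
        gcongr with n
        refine (mul_le_mul_right (hprob n) _).trans (le_of_eq ?_)
        rw [← ENNReal.ofReal_mul (by positivity)]
        congr 1
        simp only [ha]; ring
    _ = ENNReal.ofReal (B ^ q * (1 + ∑' n, ctilde * a n)) := by
        rw [← ENNReal.ofReal_tsum_of_nonneg (fun n => mul_nonneg hc (ha0 n)) (hsum.mul_left _),
          ENNReal.ofReal_mul (by positivity), ENNReal.ofReal_add zero_le_one hS, ENNReal.ofReal_one]
    _ ≤ _ := by
        refine ENNReal.ofReal_le_ofReal ?_
        have h2 : (1 + m) ^ (2 * q / mu) ≤ (1 + m) ^ (2 * q / mu + 2) :=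
          Real.rpow_le_rpow_of_exponent_le hm1 (by linarith)
        rw [hBq, mul_comm, ← mul_assoc]
        exact mul_le_mul_of_nonneg_left h2 (by positivity)
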